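/- arXiv:math/0303024 — 2 statements merged into one kernel-verified Lean document; each statement's English description precedes it below -/
import Mathlib

section
/- For every smooth compactly supported function f : ℝ^m → ℂ and every ε > 0 there exists a smooth compactly supported function F : ℂ^m → ℂ such that F restricted to ℝ^m equals f, the support of F is contained in the ε-neighborhood of supp f (with ℝ^m regarded as the subset of ℂ^m of points with all imaginary parts zero), and for every j ∈ {1,…,m} and every N ∈ ℕ there is a constant C_N with |∂F/∂z̄_j(z)| ≤ C_N |Im z_j|^N for all z ∈ ℂ^m. -/
open MeasureTheory Complex

noncomputable section

/-- The Cauchy–Riemann operator in the `j`-th variable: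
`∂F/∂z̄_j = (∂F/∂x_j + i ∂F/∂y_j)/2`. -/
def dbarj {m : ℕ} (F : (Fin m → ℂ) → ℂ) (j : Fin m) (z : Fin m → ℂ) : ℂ :=
  (fderiv ℝ F z (Pi.single j 1) + Complex.I * fderiv ℝ F z (Pi.single j Complex.I)) / 2

/-- The embedding of `ℝ^m` into `ℂ^m`. -/
def embR {m : ℕ} (x : Fin m → ℝ) : Fin m → ℂ := fun j => (x j : ℂ)

open scoped FourierTransform ContDiff

/-- All moments of `K` are integrable. -/
def Mom (K : ℝ → ℂ) : Prop := ∀ n : ℕ, Integrable (fun t : ℝ => (t : ℂ) ^ n * K t)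

theorem exists_kernel : ∃ K : ℝ → ℂ, Mom K ∧ ∀ n : ℕ, ∫ t : ℝ, (t : ℂ) ^ n * K t = I ^ n := by
  let φ : ContDiffBump (0 : ℝ) := ⟨1, 2, one_pos, one_lt_two⟩
  let k : ℝ → ℂ := fun ξ => (φ ξ : ℂ) * Complex.exp ((2 * Real.pi : ℝ) * (ξ : ℂ))
  have hk1 : HasCompactSupport k := by
    have : HasCompactSupport (fun ξ : ℝ => (φ ξ : ℂ)) :=
      φ.hasCompactSupport.comp_left (g := fun x : ℝ => (x : ℂ)) (by simp)
    exact this.mul_right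
  have hexp : ContDiff ℝ ∞ (fun ξ : ℝ => Complex.exp ((2 * Real.pi : ℝ) * (ξ : ℂ))) := by
    have h1 : ContDiff ℝ ∞ (fun ξ : ℝ => (ξ : ℂ)) := Complex.ofRealCLM.contDiff
    exact (contDiff_const.mul h1).cexp
  have hk2 : ContDiff ℝ ∞ k := by
    have h1 : ContDiff ℝ ∞ (fun ξ : ℝ => (φ ξ : ℂ)) := Complex.ofRealCLM.contDiff.comp φ.contDiff
    exact h1.mul hexp
  let kS : SchwartzMap ℝ ℂ := hk1.toSchwartzMap hk2
  let K : SchwartzMap ℝ ℂ := 𝓕⁻ kS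
  have hF : 𝓕 (K : ℝ → ℂ) = k := by
    rw [← SchwartzMap.fourier_coe]
    simp only [K, FourierTransform.fourier_fourierInv_eq]
    rfl
  have hmom : Mom K := by
    intro n
    refine (K.integrable_pow_mul volume n).mono' ?_ (Filter.Eventually.of_forall fun t => ?_)
    · exact (Continuous.mul (by fun_prop) K.continuous).aestronglyMeasurable
    · simp
  refine ⟨K, hmom, fun n => ?_⟩
  have h1 := Real.iteratedDeriv_fourier (f := (K : ℝ → ℂ)) (N := ⊤) (n := n)
    (fun n _ => by simpa [Complex.real_smul] using hmom n) le_top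
  rw [hF] at h1
  have h2 := congrFun h1 0
  have hd : ∀ n : ℕ, iteratedDeriv n (fun ξ : ℝ => Complex.exp ((2 * Real.pi : ℝ) * (ξ : ℂ)))
      = fun ξ : ℝ => ((2 * Real.pi : ℝ) : ℂ) ^ n * Complex.exp ((2 * Real.pi : ℝ) * (ξ : ℂ)) := by
    intro n
    induction n with
    | zero => simp
    | succ n ih =>
      rw [iteratedDeriv_succ, ih]
      ext ξ
      have h0 : HasDerivAt (fun ξ : ℝ => (ξ : ℂ)) 1 ξ := Complex.ofRealCLM.hasDerivAt
      have := ((h0.const_mul ((2 * Real.pi : ℝ) : ℂ)).cexp).const_mul (((2 * Real.pi : ℝ) : ℂ) ^ n)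
      rw [this.deriv]
      ring
  have h3 : iteratedDeriv n k 0 = ((2 * Real.pi : ℝ) : ℂ) ^ n := by
    have he : k =ᶠ[nhds 0] (fun ξ : ℝ => Complex.exp ((2 * Real.pi : ℝ) * (ξ : ℂ))) := by
      filter_upwards [φ.eventuallyEq_one] with ξ hξ
      simp [k, hξ]
    rw [he.iteratedDeriv_eq, hd]
    simp
  rw [h3, Real.fourier_eq'] at h2
  have h2' : ∫ v : ℝ, cexp (((-2 * Real.pi * inner ℝ v (0 : ℝ) : ℝ) : ℂ) * I) •
      ((-2 * Real.pi * I * v) ^ n • K v) =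
      ∫ v : ℝ, (-2 * Real.pi * I) ^ n * ((v : ℂ) ^ n * K v) := by
    congr 1
    ext v
    simp
    ring
  rw [h2', integral_const_mul] at h2
  have hpi : ((2 * Real.pi : ℝ) : ℂ) ≠ 0 := by
    exact_mod_cast (by positivity : (2 * Real.pi : ℝ) ≠ 0)
  have h4 : ((2 * Real.pi : ℝ) : ℂ) ^ n * 1 =
      ((2 * Real.pi : ℝ) : ℂ) ^ n * ((-I) ^ n * ∫ t : ℝ, (t : ℂ) ^ n * K t) := by
    rw [mul_one]
    refine h2.trans ?_
    rw [← mul_assoc, ← mul_pow]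
    congr 2
    push_cast
    ring
  have h5 := mul_left_cancel₀ (pow_ne_zero n hpi) h4
  calc ∫ t : ℝ, (t : ℂ) ^ n * K t = (I * (-I)) ^ n * ∫ t : ℝ, (t : ℂ) ^ n * K t := by simp
    _ = I ^ n * ((-I) ^ n * ∫ t : ℝ, (t : ℂ) ^ n * K t) := by rw [mul_pow, mul_assoc]
    _ = I ^ n := by rw [← h5, mul_one]

theorem Mom.integrable {K : ℝ → ℂ} (hK : Mom K) : Integrable K := by
  simpa using hK 0

theorem Mom.mul {K : ℝ → ℂ} (hK : Mom K) : Mom (fun t => (t : ℂ) * K t) := by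
  intro n
  refine (hK (n + 1)).congr (Filter.Eventually.of_forall fun t => ?_)
  simp only
  ring

theorem Mom.norm {K : ℝ → ℂ} (hK : Mom K) (n : ℕ) :
    Integrable (fun t : ℝ => |t| ^ n * ‖K t‖) := by
  refine (hK n).norm.congr (Filter.Eventually.of_forall fun t => ?_)
  simp

set_option linter.unusedSectionVars false

section P

variable {V : Type} [NormedAddCommGroup V] [NormedSpace ℝ V]
variable {F : Type} [NormedAddCommGroup F] [NormedSpace ℝ F] [NormedSpace ℂ F]
  [IsScalarTower ℝ ℂ F]

/-- smooth with compact support -/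
def Sm {X : Type} [NormedAddCommGroup X] [NormedSpace ℝ X]
    {Y : Type} [NormedAddCommGroup Y] [NormedSpace ℝ Y] (h : X → Y) : Prop :=
  ContDiff ℝ ∞ h ∧ HasCompactSupport h

theorem Sm.bdd {X : Type} [NormedAddCommGroup X] [NormedSpace ℝ X]
    {Y : Type} [NormedAddCommGroup Y] [NormedSpace ℝ Y] {h : X → Y} (hh : Sm h) :
    ∃ C : ℝ, 0 ≤ C ∧ ∀ x, ‖h x‖ ≤ C := by
  obtain ⟨C, hC⟩ := hh.2.exists_bound_of_continuous hh.1.continuous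
  exact ⟨C, (norm_nonneg _).trans (hC 0), hC⟩

theorem Sm.fderiv {X : Type} [NormedAddCommGroup X] [NormedSpace ℝ X]
    {Y : Type} [NormedAddCommGroup Y] [NormedSpace ℝ Y] {h : X → Y} (hh : Sm h) :
    Sm (fderiv ℝ h) :=
  ⟨hh.1.fderiv_right (m := ∞) (by simp), hh.2.fderiv ℝ⟩

theorem Sm.clm {X : Type} [NormedAddCommGroup X] [NormedSpace ℝ X]
    {Y : Type} [NormedAddCommGroup Y] [NormedSpace ℝ Y]
    {Z : Type} [NormedAddCommGroup Z] [NormedSpace ℝ Z] {h : X → Y} (hh : Sm h) (L : Y →L[ℝ] Z) :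
    Sm (fun x => L (h x)) :=
  ⟨L.contDiff.comp hh.1, hh.2.comp_left (g := L) (map_zero L)⟩

theorem Sm.dir {X : Type} [NormedAddCommGroup X] [NormedSpace ℝ X]
    {Y : Type} [NormedAddCommGroup Y] [NormedSpace ℝ Y] {h : X → Y} (hh : Sm h) (v : X) :
    Sm (fun x => _root_.fderiv ℝ h x v) :=
  hh.fderiv.clm (ContinuousLinearMap.apply ℝ Y v)

/-- the averaging operator -/
def PK (l : V →L[ℝ] ℝ) (K : ℝ → ℂ) (h : V × ℝ → F) (z : V) : F :=
  ∫ t : ℝ, K t • h (z, t * l z)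

theorem PK_integrable (l : V →L[ℝ] ℝ) {K : ℝ → ℂ} (hK : Mom K) {h : V × ℝ → F} (hh : Sm h)
    (z : V) : Integrable (fun t : ℝ => K t • h (z, t * l z)) := by
  obtain ⟨C, hC0, hC⟩ := hh.bdd
  refine (hK.integrable.norm.mul_const C).mono' ?_ (Filter.Eventually.of_forall fun t => ?_)
  · refine hK.integrable.aestronglyMeasurable.smul (Continuous.aestronglyMeasurable ?_)
    exact hh.1.continuous.comp (by fun_prop)
  · rw [norm_smul]
    exact mul_le_mul_of_nonneg_left (hC _) (norm_nonneg _)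

/-- derivative in the first slot -/
def D1 (h : V × ℝ → F) (p : V × ℝ) : V →L[ℝ] F :=
  (fderiv ℝ h p).comp (ContinuousLinearMap.inl ℝ V ℝ)

/-- derivative in the second slot -/
def D2 (l : V →L[ℝ] ℝ) (h : V × ℝ → F) (p : V × ℝ) : V →L[ℝ] F :=
  l.smulRight (fderiv ℝ h p (0, 1))

theorem Sm.D1 {h : V × ℝ → F} (hh : Sm h) : Sm (D1 h) :=
  hh.fderiv.clm ((ContinuousLinearMap.compL ℝ V (V × ℝ) F).flip (ContinuousLinearMap.inl ℝ V ℝ))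

theorem Sm.D2 (l : V →L[ℝ] ℝ) {h : V × ℝ → F} (hh : Sm h) : Sm (D2 l h) :=
  (hh.dir (0, 1)).clm (ContinuousLinearMap.smulRightL ℝ V F l)

theorem PK_hasFDerivAt (l : V →L[ℝ] ℝ) {K : ℝ → ℂ} (hK : Mom K) {h : V × ℝ → F} (hh : Sm h)
    (z : V) : HasFDerivAt (PK l K h)
      (PK l K (D1 h) z + PK l (fun t => (t : ℂ) * K t) (D2 l h) z) z := by
  obtain ⟨C1, hC10, hC1⟩ := hh.D1.bdd
  obtain ⟨C2, hC20, hC2⟩ := (hh.D2 l).bdd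
  unfold PK
  have i1 := PK_integrable l hK hh.D1
  have i2 := PK_integrable l hK.mul (hh.D2 l)
  rw [← integral_add (i1 z) (i2 z)]
  refine hasFDerivAt_integral_of_dominated_of_fderiv_le (𝕜 := ℝ) (s := Set.univ)
    (F := fun z t => K t • h (z, t * l z))
    (F' := fun z t => K t • _root_.D1 h (z, t * l z)
      + ((t : ℂ) * K t) • _root_.D2 l h (z, t * l z))
    (bound := fun t => ‖K t‖ * C1 + ‖(t : ℂ) * K t‖ * C2)
    Filter.univ_mem ?_ (PK_integrable l hK hh z) ?_ ?_ ?_ ?_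
  · exact Filter.Eventually.of_forall fun z => (PK_integrable l hK hh z).aestronglyMeasurable
  · exact ((i1 z).add (i2 z)).aestronglyMeasurable
  · refine Filter.Eventually.of_forall fun t z _ => ?_
    refine (norm_add_le _ _).trans ?_
    rw [norm_smul, norm_smul]
    gcongr
    · exact hC1 _
    · exact hC2 _
  · exact (hK.integrable.norm.mul_const C1).add (hK.mul.integrable.norm.mul_const C2)
  · refine Filter.Eventually.of_forall fun t z _ => ?_
    have hd : HasFDerivAt h (fderiv ℝ h (z, t * l z)) (z, t * l z) :=
      (hh.1.differentiable (by simp)).differentiableAt.hasFDerivAt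
    have hg : HasFDerivAt (fun z : V => (z, t * l z))
        ((ContinuousLinearMap.id ℝ V).prod (t • l)) z :=
      (hasFDerivAt_id z).prodMk (l.hasFDerivAt.const_mul t)
    have := (hd.comp z hg).const_smul (K t)
    refine this.congr_fderiv ?_
    ext v
    have e : ((v, t * l v) : V × ℝ) = (v, 0) + (t * l v) • ((0 : V), (1 : ℝ)) := by simp
    simp [_root_.D1, _root_.D2, e, -Prod.mk_add_mk, -Prod.smul_mk]
    rw [mul_comm (t : ℂ), mul_smul, mul_smul]
    congr 1
    exact (algebraMap_smul ℂ t _).symm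

theorem PK_contDiff_nat (l : V →L[ℝ] ℝ) (n : ℕ) :
    ∀ {F : Type} [NormedAddCommGroup F] [NormedSpace ℝ F] [NormedSpace ℂ F]
    [IsScalarTower ℝ ℂ F] {K : ℝ → ℂ} (_ : Mom K) {h : V × ℝ → F} (_ : Sm h),
    ContDiff ℝ n (PK l K h) := by
  induction n with
  | zero =>
    intro F _ _ _ _ K hK h hh
    exact contDiff_zero.2 (continuous_iff_continuousAt.2
      fun z => (PK_hasFDerivAt l hK hh z).continuousAt)
  | succ n ih =>
    intro F _ _ _ _ K hK h hh
    push_cast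
    rw [contDiff_succ_iff_hasFDerivAt]
    exact ⟨_, (ih hK hh.D1).add (ih hK.mul (hh.D2 l)), PK_hasFDerivAt l hK hh⟩

theorem PK_contDiff (l : V →L[ℝ] ℝ) {K : ℝ → ℂ} (hK : Mom K) {h : V × ℝ → F} (hh : Sm h) :
    ContDiff ℝ ∞ (PK l K h) :=
  contDiff_infty.2 fun n => PK_contDiff_nat l n hK hh

theorem PK_dir (l : V →L[ℝ] ℝ) {K : ℝ → ℂ} (hK : Mom K) {h : V × ℝ → ℂ} (hh : Sm h) (z v : V) :
    fderiv ℝ (PK l K h) z v = PK l K (fun p => fderiv ℝ h p (v, 0)) z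
      + l v * PK l (fun t => (t : ℂ) * K t) (fun p => fderiv ℝ h p (0, 1)) z := by
  rw [(PK_hasFDerivAt l hK hh z).fderiv, add_apply]
  unfold PK
  rw [ContinuousLinearMap.integral_apply (PK_integrable l hK hh.D1 z),
    ContinuousLinearMap.integral_apply (PK_integrable l hK.mul (hh.D2 l) z),
    ← integral_const_mul]
  congr 1
  congr 1
  ext t
  simp [D2]
  ring

theorem PK_bound (l : V →L[ℝ] ℝ) {K : ℝ → ℂ} (hK : Mom K) {h : V × ℝ → ℂ} (z : V) (n : ℕ) (B : ℝ)
    (hB : ∀ t : ℝ, ‖h (z, t * l z)‖ ≤ B * |t| ^ n) :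
    ‖PK l K h z‖ ≤ B * ∫ t : ℝ, |t| ^ n * ‖K t‖ := by
  rw [← integral_const_mul]
  refine norm_integral_le_of_norm_le ((hK.norm n).const_mul B)
    (Filter.Eventually.of_forall fun t => ?_)
  rw [norm_smul, ← mul_assoc, mul_comm]
  exact mul_le_mul_of_nonneg_right (hB t) (norm_nonneg _)

/-- vanishing to infinite order along `l = 0`, uniformly -/
def Flat (l : V →L[ℝ] ℝ) (H : V → ℂ) : Prop := ∀ N : ℕ, ∃ C : ℝ, ∀ z, ‖H z‖ ≤ C * |l z| ^ N

theorem Flat.add {l : V →L[ℝ] ℝ} {H H' : V → ℂ} (h : Flat l H) (h' : Flat l H') :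
    Flat l (fun z => H z + H' z) := by
  intro N
  obtain ⟨C, hC⟩ := h N
  obtain ⟨C', hC'⟩ := h' N
  refine ⟨C + C', fun z => (norm_add_le _ _).trans ?_⟩
  rw [add_mul]
  exact add_le_add (hC z) (hC' z)

theorem Flat.const_mul {l : V →L[ℝ] ℝ} {H : V → ℂ} (h : Flat l H) (c : ℂ) :
    Flat l (fun z => c * H z) := by
  intro N
  obtain ⟨C, hC⟩ := h N
  refine ⟨‖c‖ * C, fun z => ?_⟩
  rw [norm_mul, mul_assoc]
  exact mul_le_mul_of_nonneg_left (hC z) (norm_nonneg _)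

/-- a bounded function vanishing for small `l` is flat -/
theorem flat_of_zero_near {l : V →L[ℝ] ℝ} {H : V → ℂ} (C : ℝ) (hC : ∀ z, ‖H z‖ ≤ C) (r : ℝ)
    (hr : 0 < r) (h0 : ∀ z, |l z| < r → H z = 0) : Flat l H := by
  intro N
  have hC0 : 0 ≤ C := (norm_nonneg _).trans (hC 0)
  refine ⟨C / r ^ N, fun z => ?_⟩
  by_cases hz : |l z| < r
  · rw [h0 z hz, norm_zero]
    positivity
  · refine (hC z).trans ?_
    rw [div_mul_eq_mul_div, le_div_iff₀ (by positivity)]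
    gcongr
    exact not_lt.1 hz

theorem taylor_unif (N : ℕ) : ∀ {b : V × ℝ → ℂ} (_ : Sm b), ∃ (c : ℕ → V → ℂ) (C : ℝ), 0 ≤ C ∧
    ∀ z (s : ℝ), ‖b (z, s) - ∑ k ∈ Finset.range N, c k z * (s : ℂ) ^ k‖ ≤ C * |s| ^ N := by
  induction N with
  | zero =>
    intro b hb
    obtain ⟨C, hC0, hC⟩ := hb.bdd
    exact ⟨fun _ _ => 0, C, hC0, fun z s => by simpa using hC _⟩
  | succ N ih =>
    intro b hb
    obtain ⟨c, C, hC0, hC⟩ := ih (hb.dir (0, 1))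
    refine ⟨fun k z => if k = 0 then b (z, 0) else c (k - 1) z / k, C, hC0, fun z s => ?_⟩
    have hder : ∀ s : ℝ, HasDerivAt
        (fun s : ℝ => b (z, s) - ∑ k ∈ Finset.range N, c k z / ((k + 1 : ℕ) : ℂ) * (s : ℂ) ^ (k + 1))
        (fderiv ℝ b (z, s) (0, 1) - ∑ k ∈ Finset.range N, c k z * (s : ℂ) ^ k) s := by
      intro s
      have hd : HasFDerivAt b (fderiv ℝ b (z, s)) (z, s) :=
        (hb.1.differentiable (by simp)).differentiableAt.hasFDerivAt
      have hg : HasDerivAt (fun s : ℝ => (z, s)) ((0 : V), (1 : ℝ)) s :=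
        (hasDerivAt_const s z).prodMk (hasDerivAt_id s)
      refine (hd.comp_hasDerivAt s hg).sub (HasDerivAt.fun_sum fun k _ => ?_)
      have h0 : HasDerivAt (fun ξ : ℝ => (ξ : ℂ)) 1 s := Complex.ofRealCLM.hasDerivAt
      refine ((h0.pow (k + 1)).const_mul (c k z / ((k + 1 : ℕ) : ℂ))).congr_deriv ?_
      have : ((k + 1 : ℕ) : ℂ) ≠ 0 := Nat.cast_ne_zero.2 (Nat.succ_ne_zero k)
      simp only [Nat.add_sub_cancel]
      field_simp
    have hmv := Convex.norm_image_sub_le_of_norm_hasDerivWithin_le (C := C * |s| ^ N)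
      (s := Set.Icc (-|s|) |s|) (x := 0) (y := s)
      (fun u _ => (hder u).hasDerivWithinAt) (fun u hu => (hC z u).trans (by
        have := abs_le.2 hu
        exact mul_le_mul_of_nonneg_left (pow_le_pow_left₀ (abs_nonneg u) this N) hC0)) (convex_Icc _ _) (by simp) (by simp [neg_abs_le, le_abs_self])
    rw [Finset.sum_range_succ']
    simp only [sub_zero, Real.norm_eq_abs] at hmv
    rw [pow_succ, ← mul_assoc]
    refine le_trans (le_of_eq ?_) hmv
    congr 1
    simp
    ring

theorem PK_flat_of_moments (l : V →L[ℝ] ℝ) {L : ℝ → ℂ} (hL : Mom L)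
    (h0 : ∀ n : ℕ, ∫ t : ℝ, (t : ℂ) ^ n * L t = 0) {b : V × ℝ → ℂ} (hb : Sm b) :
    Flat l (PK l L b) := by
  intro N
  obtain ⟨c, C, hC0, hC⟩ := taylor_unif N hb
  refine ⟨C * ∫ t : ℝ, |t| ^ N * ‖L t‖, fun z => ?_⟩
  have key : PK l L b z = PK l L
      (fun p => b p - ∑ k ∈ Finset.range N, c k p.1 * (p.2 : ℂ) ^ k) z := by
    unfold PK
    have e : ∀ t : ℝ, L t • (b (z, t * l z) -
        ∑ k ∈ Finset.range N, c k z * ((t * l z : ℝ) : ℂ) ^ k) =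
        L t • b (z, t * l z) -
          ∑ k ∈ Finset.range N, (c k z * (l z : ℂ) ^ k) * ((t : ℂ) ^ k * L t) := by
      intro t
      rw [smul_sub, smul_eq_mul, smul_eq_mul, Finset.mul_sum]
      congr 1
      refine Finset.sum_congr rfl fun k _ => ?_
      push_cast
      ring
    simp only [e]
    rw [integral_sub (PK_integrable l hL hb z)
      (integrable_finsetSum _ fun k _ => (hL k).const_mul _),
      integral_finsetSum _ fun k _ => (hL k).const_mul _]
    simp [integral_const_mul, h0]
  rw [key, mul_right_comm]
  refine PK_bound l hL z N (C * |l z| ^ N) fun t => ?_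
  refine (hC z (t * l z)).trans (le_of_eq ?_)
  rw [abs_mul, mul_pow]
  ring

theorem PK_flat_of_bound (l : V →L[ℝ] ℝ) {K : ℝ → ℂ} (hK : Mom K) {q : V × ℝ → ℂ}
    (hq : ∀ N : ℕ, ∃ C : ℝ, ∀ z s, ‖q (z, s)‖ ≤ C * |s| ^ N) : Flat l (PK l K q) := by
  intro N
  obtain ⟨C, hC⟩ := hq N
  refine ⟨C * ∫ t : ℝ, |t| ^ N * ‖K t‖, fun z => ?_⟩
  rw [mul_right_comm]
  refine PK_bound l hK z N (C * |l z| ^ N) fun t => ?_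
  refine (hC z (t * l z)).trans (le_of_eq ?_)
  rw [abs_mul, mul_pow]
  ring

/-- integrand of the extension operator -/
def hE (e : V) (φ : ℝ → ℂ) (G : V → ℂ) (p : V × ℝ) : ℂ := G (p.1 + p.2 • e) * φ p.2

theorem Sm.hE {G : V → ℂ} (hG : Sm G) (e : V) {φ : ℝ → ℂ} (hφ : Sm φ) : Sm (hE e φ G) := by
  constructor
  · have h1 : ContDiff ℝ ∞ (fun p : V × ℝ => p.1 + p.2 • e) := by fun_prop
    exact (hG.1.comp h1).mul (hφ.1.comp contDiff_snd)
  · have hc : IsCompact ((fun p : V × ℝ => (p.1 - p.2 • e, p.2)) '' (tsupport G ×ˢ tsupport φ)) :=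
      (hG.2.isCompact.prod hφ.2.isCompact).image (by fun_prop)
    refine HasCompactSupport.intro hc fun p hp => ?_
    by_contra hne
    have h1 := left_ne_zero_of_mul hne
    have h2 := right_ne_zero_of_mul hne
    exact hp ⟨(p.1 + p.2 • e, p.2), ⟨subset_tsupport _ h1, subset_tsupport _ h2⟩, by simp⟩

theorem hE_fderiv (e : V) {φ : ℝ → ℂ} (hφ : Sm φ) {G : V → ℂ} (hG : Sm G) (p : V × ℝ) (v : V)
    (s : ℝ) : fderiv ℝ (hE e φ G) p (v, s) =
      fderiv ℝ G (p.1 + p.2 • e) (v + s • e) * φ p.2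
      + G (p.1 + p.2 • e) * (s * deriv φ p.2) := by
  have hd : HasFDerivAt G (fderiv ℝ G (p.1 + p.2 • e)) (p.1 + p.2 • e) :=
    (hG.1.differentiable (by simp)).differentiableAt.hasFDerivAt
  have h1 : HasFDerivAt (fun p : V × ℝ => p.1 + p.2 • e)
      (ContinuousLinearMap.fst ℝ V ℝ + (ContinuousLinearMap.snd ℝ V ℝ).smulRight e) p :=
    (ContinuousLinearMap.fst ℝ V ℝ + (ContinuousLinearMap.snd ℝ V ℝ).smulRight e).hasFDerivAt
  have h2 : HasDerivAt φ (deriv φ p.2) p.2 :=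
    (hφ.1.differentiable (by simp)).differentiableAt.hasDerivAt
  have h3 := h2.hasFDerivAt.comp p (ContinuousLinearMap.snd ℝ V ℝ).hasFDerivAt
  have h4 := (HasFDerivAt.comp p hd h1).mul h3
  have h5 : fderiv ℝ (hE e φ G) p = _ := h4.fderiv
  rw [h5]
  simp
  ring

/-- the extension operator in one direction -/
def EE (l : V →L[ℝ] ℝ) (K : ℝ → ℂ) (e : V) (φ : ℝ → ℂ) (G : V → ℂ) : V → ℂ := PK l K (hE e φ G)

theorem EE_dir (l : V →L[ℝ] ℝ) {K : ℝ → ℂ} (hK : Mom K) (e : V) {φ : ℝ → ℂ} (hφ : Sm φ)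
    {G : V → ℂ} (hG : Sm G) (z v : V) (hv : l v = 0) :
    fderiv ℝ (EE l K e φ G) z v = EE l K e φ (fun z => fderiv ℝ G z v) z := by
  unfold EE
  rw [PK_dir l hK (hG.hE e hφ), hv]
  simp only [ofReal_zero, zero_mul, add_zero]
  congr 1
  ext p
  rw [hE_fderiv e hφ hG]
  simp [hE]

theorem Flat.EE {l l' : V →L[ℝ] ℝ} {K : ℝ → ℂ} (hK : Mom K) {e : V} (he : l' e = 0)
    {φ : ℝ → ℂ} (hφ : Sm φ) {H : V → ℂ} (hH : Flat l' H) : Flat l' (EE l K e φ H) := by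
  intro N
  obtain ⟨C, hC⟩ := hH N
  obtain ⟨B, hB0, hB⟩ := hφ.bdd
  refine ⟨C * B * ∫ t : ℝ, |t| ^ 0 * ‖K t‖, fun z => ?_⟩
  rw [mul_right_comm]
  refine PK_bound l hK z 0 (C * B * |l' z| ^ N) fun t => ?_
  have h1 := hC (z + (t * l z) • e)
  rw [map_add, map_smul, he, smul_zero, add_zero] at h1
  rw [pow_zero, mul_one, mul_right_comm]
  unfold hE
  rw [norm_mul]
  exact mul_le_mul h1 (hB _) (norm_nonneg _) ((norm_nonneg _).trans h1)

theorem EE_dbar (l : V →L[ℝ] ℝ) {K : ℝ → ℂ} (hK : Mom K)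
    (hKm : ∀ n : ℕ, ∫ t : ℝ, (t : ℂ) ^ n * K t = I ^ n)
    (e w : V) (he : l e = 0) (hw : l w = 1) {φ : ℝ → ℂ} (hφ : Sm φ) (r : ℝ) (hr : 0 < r)
    (hφ1 : ∀ s, |s| < r → deriv φ s = 0)
    {G : V → ℂ} (hG : Sm G) (hGw : Flat l (fun z => fderiv ℝ G z w)) :
    Flat l (fun z => fderiv ℝ (EE l K e φ G) z e + I * fderiv ℝ (EE l K e φ G) z w) := by
  have hL : Mom (fun t => K t + I * ((t : ℂ) * K t)) := by
    intro n
    refine ((hK n).add ((hK.mul n).const_mul I)).congr (Filter.Eventually.of_forall fun t => ?_)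
    simp only [Pi.add_apply]
    ring
  have hL0 : ∀ n : ℕ, ∫ t : ℝ, (t : ℂ) ^ n * (K t + I * ((t : ℂ) * K t)) = 0 := by
    intro n
    have : ∀ t : ℝ, (t : ℂ) ^ n * (K t + I * ((t : ℂ) * K t)) =
        (t : ℂ) ^ n * K t + I * ((t : ℂ) ^ (n + 1) * K t) := fun t => by ring
    simp only [this]
    rw [integral_add (hK n) ((hK (n + 1)).const_mul I), integral_const_mul, hKm, hKm, pow_succ,
      mul_comm (I ^ n) I, ← mul_assoc, I_mul_I]
    ring
  let q : V × ℝ → ℂ := fun p => G (p.1 + p.2 • e) * deriv φ p.2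
  have hφ' : Sm (deriv φ) := (hφ.dir 1)
  have hqs : Sm q := hG.hE e hφ'
  have hq : ∀ N : ℕ, ∃ C : ℝ, ∀ z s, ‖q (z, s)‖ ≤ C * |s| ^ N := by
    intro N
    obtain ⟨B, hB0, hB⟩ := hφ'.bdd
    obtain ⟨A, hA0, hA⟩ := hG.bdd
    obtain ⟨C, hC⟩ := flat_of_zero_near (l := ContinuousLinearMap.id ℝ ℝ) B hB r hr
      (fun s hs => hφ1 s hs) N
    refine ⟨A * C, fun z s => ?_⟩
    simp only [q]
    rw [norm_mul, mul_assoc]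
    exact mul_le_mul (hA _) (hC s) (norm_nonneg _) hA0
  have hbS : Sm (hE e φ (fun z => fderiv ℝ G z e)) := (hG.dir e).hE e hφ
  have f1 := PK_flat_of_moments l hL hL0 hbS
  have f2 := (Flat.EE (l := l) hK he hφ hGw).const_mul I
  have f3 := (PK_flat_of_bound l hK.mul hq).const_mul I
  have key : ∀ z, fderiv ℝ (EE l K e φ G) z e + I * fderiv ℝ (EE l K e φ G) z w =
      PK l (fun t => K t + I * ((t : ℂ) * K t)) (hE e φ (fun z => fderiv ℝ G z e)) z
      + I * EE l K e φ (fun z => fderiv ℝ G z w) z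
      + I * PK l (fun t => (t : ℂ) * K t) q z := by
    intro z
    rw [EE_dir l hK e hφ hG z e he]
    unfold EE
    rw [PK_dir l hK (hG.hE e hφ), hw]
    have e1 : (fun p : V × ℝ => fderiv ℝ (hE e φ G) p (w, 0)) =
        hE e φ (fun z => fderiv ℝ G z w) := by
      ext p
      rw [hE_fderiv e hφ hG]
      simp [hE]
    have e2 : PK l (fun t => (t : ℂ) * K t) (fun p : V × ℝ => fderiv ℝ (hE e φ G) p (0, 1)) z =
        PK l (fun t => (t : ℂ) * K t) (hE e φ (fun z => fderiv ℝ G z e)) z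
        + PK l (fun t => (t : ℂ) * K t) q z := by
      unfold PK
      rw [← integral_add (PK_integrable l hK.mul hbS z) (PK_integrable l hK.mul hqs z)]
      congr 1
      ext t
      beta_reduce
      rw [hE_fderiv e hφ hG]
      simp [hE, q]
      ring
    have e3 : PK l (fun t => K t + I * ((t : ℂ) * K t)) (hE e φ (fun z => fderiv ℝ G z e)) z =
        PK l K (hE e φ (fun z => fderiv ℝ G z e)) z
        + I * PK l (fun t => (t : ℂ) * K t) (hE e φ (fun z => fderiv ℝ G z e)) z := by
      unfold PK
      rw [← integral_const_mul, ← integral_add (PK_integrable l hK hbS z)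
        ((PK_integrable l hK.mul hbS z).const_mul I)]
      congr 1
      ext t
      simp only [smul_eq_mul]
      ring
    rw [e1, e2, e3]
    simp only [ofReal_one]
    ring
  have f := (f1.add f2).add f3
  intro N
  obtain ⟨C, hC⟩ := f N
  exact ⟨C, fun z => by beta_reduce; rw [key z]; exact hC z⟩

theorem EE_zero (l : V →L[ℝ] ℝ) {K : ℝ → ℂ} (hKm : ∫ t : ℝ, K t = 1)
    (e : V) {φ : ℝ → ℂ} (hφ : φ 0 = 1) (G : V → ℂ) (z : V) (hz : l z = 0) :
    EE l K e φ G z = G z := by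
  simp [EE, PK, hE, hz, hφ, integral_mul_const, hKm]

theorem EE_tsupport (l : V →L[ℝ] ℝ) (K : ℝ → ℂ) (e : V) (he : ‖e‖ ≤ 1) (δ : ℝ)
    {φ : ℝ → ℂ} (hφ : ∀ s, δ < |s| → φ s = 0) (G : V → ℂ) :
    tsupport (EE l K e φ G) ⊆ Metric.cthickening δ (tsupport G) := by
  refine closure_minimal (fun z hz => ?_) Metric.isClosed_cthickening
  have : ∃ t : ℝ, hE e φ G (z, t * l z) ≠ 0 := by
    by_contra hcon
    push Not at hcon
    exact hz (by simp [EE, PK, hcon])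
  obtain ⟨t, ht⟩ := this
  have h1 := left_ne_zero_of_mul ht
  have h2 := right_ne_zero_of_mul ht
  refine Metric.mem_cthickening_of_dist_le z _ δ _ (subset_tsupport _ h1) ?_
  have h3 : |t * l z| ≤ δ := by
    by_contra hcon
    exact h2 (hφ _ (not_le.1 hcon))
  rw [dist_eq_norm]
  simp only [sub_add_cancel_left, norm_neg]
  rw [norm_smul]
  calc _ ≤ |t * l z| * 1 := by gcongr; exact le_rfl
    _ ≤ δ := by simpa using h3

end P

theorem EE_lin {V : Type} [NormedAddCommGroup V] [NormedSpace ℝ V] (l : V →L[ℝ] ℝ) {K : ℝ → ℂ}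
    (hK : Mom K) (e : V) {φ : ℝ → ℂ} (hφ : Sm φ) {G H : V → ℂ} (hG : Sm G) (hH : Sm H) (z : V) :
    EE l K e φ G z + I * EE l K e φ H z = EE l K e φ (fun z => G z + I * H z) z := by
  unfold EE PK
  rw [← integral_const_mul, ← integral_add (PK_integrable l hK (hG.hE e hφ) z)
    ((PK_integrable l hK (hH.hE e hφ) z).const_mul I)]
  congr 1
  ext t
  simp only [smul_eq_mul, hE]
  ring

/-- imaginary part of the `j`-th coordinate -/
def yj {m : ℕ} (j : Fin m) : (Fin m → ℂ) →L[ℝ] ℝ :=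
  Complex.imCLM.comp (ContinuousLinearMap.proj j)

theorem yj_apply {m : ℕ} (j : Fin m) (z : Fin m → ℂ) : yj j z = (z j).im := rfl

/-- real bump as a complex function -/
theorem exists_bump (δ : ℝ) (hδ : 0 < δ) : ∃ φ : ℝ → ℂ, Sm φ ∧
    (∀ s, |s| < δ / 2 → φ s = 1) ∧ (∀ s, δ < |s| → φ s = 0) := by
  let φ : ContDiffBump (0 : ℝ) := ⟨δ / 2, δ, by positivity, by linarith⟩
  refine ⟨fun s => (φ s : ℂ), ⟨?_, ?_⟩, ?_, ?_⟩
  · exact Complex.ofRealCLM.contDiff.comp φ.contDiff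
  · exact φ.hasCompactSupport.comp_left (g := fun x : ℝ => (x : ℂ)) (by simp)
  · intro s hs
    have := φ.one_of_mem_closedBall (x := s) (by simpa [φ] using hs.le)
    simp [this]
  · intro s hs
    have := φ.zero_of_le_dist (x := s) (by simpa [φ] using hs.le)
    simp [this]

theorem deriv_bump {φ : ℝ → ℂ} {r : ℝ} (h : ∀ s, |s| < r → φ s = 1) (s : ℝ) (hs : |s| < r) :
    deriv φ s = 0 := by
  have : φ =ᶠ[nhds s] fun _ => 1 := by
    filter_upwards [(isOpen_lt continuous_abs continuous_const).mem_nhds hs] with u hu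
    exact h u hu
  rw [this.deriv_eq, deriv_const]

theorem embR_continuous {m : ℕ} : Continuous (embR (m := m)) := by
  unfold embR
  fun_prop

theorem compact_of_tsupport {m : ℕ} {f : (Fin m → ℝ) → ℂ} (hf : HasCompactSupport f)
    {G : (Fin m → ℂ) → ℂ} {ε : ℝ} (h : tsupport G ⊆ Metric.thickening ε (embR '' tsupport f)) :
    HasCompactSupport G := by
  have hc : IsCompact (embR '' tsupport f) := hf.isCompact.image embR_continuous
  exact Metric.isCompact_of_isClosed_isBounded (isClosed_tsupport _)
    (hc.isBounded.thickening.subset h)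

theorem base_case {m : ℕ} (f : (Fin m → ℝ) → ℂ)
    (hf_smooth : ContDiff ℝ ∞ f) (hf_supp : HasCompactSupport f) (ε : ℝ) (hε : 0 < ε) :
    ∃ G : (Fin m → ℂ) → ℂ, Sm G ∧ (∀ x, G (embR x) = f x) ∧
      tsupport G ⊆ Metric.thickening ε (embR '' tsupport f) ∧
      ∀ i, Flat (yj i) (fun z => fderiv ℝ G z (Pi.single i I)) := by
  obtain ⟨φ, hφ, hφ1, hφ0⟩ := exists_bump (ε / 2) (by positivity)
  let re : (Fin m → ℂ) → (Fin m → ℝ) := fun z k => (z k).re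
  have hre : ContDiff ℝ ∞ re :=
    contDiff_pi.2 fun k => (Complex.reCLM.comp
      (ContinuousLinearMap.proj (R := ℝ) (φ := fun _ : Fin m => ℂ) k)).contDiff
  let G : (Fin m → ℂ) → ℂ := fun z => f (re z) * ∏ i, φ (yj i z)
  have hGs : ContDiff ℝ ∞ G :=
    (hf_smooth.comp hre).mul (contDiff_prod fun i _ => hφ.1.comp (yj i).contDiff)
  have hsub : tsupport G ⊆ Metric.thickening ε (embR '' tsupport f) := by
    have h1 : tsupport G ⊆ {z | re z ∈ tsupport f ∧ ∀ i, |yj i z| ≤ ε / 2} := by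
      refine closure_minimal (fun z hz => ⟨?_, fun i => ?_⟩) ?_
      · exact subset_tsupport _ (left_ne_zero_of_mul hz)
      · by_contra hcon
        refine right_ne_zero_of_mul hz (Finset.prod_eq_zero (Finset.mem_univ i) ?_)
        exact hφ0 _ (not_le.1 hcon)
      · have hcl : IsClosed (⋂ i : Fin m, {z : Fin m → ℂ | |yj i z| ≤ ε / 2}) :=
          isClosed_iInter fun i => isClosed_le (by fun_prop) continuous_const
        have heq : {z : Fin m → ℂ | re z ∈ tsupport f ∧ ∀ i, |yj i z| ≤ ε / 2} =
            re ⁻¹' tsupport f ∩ ⋂ i : Fin m, {z : Fin m → ℂ | |yj i z| ≤ ε / 2} :=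
          Set.ext fun z => by
            simp only [Set.mem_inter_iff, Set.mem_iInter]
            exact Iff.rfl
        rw [heq]
        exact ((isClosed_tsupport f).preimage hre.continuous).inter hcl
    intro z hz
    obtain ⟨h2, h3⟩ := h1 hz
    refine Metric.mem_thickening_iff.2 ⟨embR (re z), ⟨_, h2, rfl⟩, ?_⟩
    refine lt_of_le_of_lt ?_ (half_lt_self hε)
    refine (dist_pi_le_iff (by positivity)).2 fun i => ?_
    rw [Complex.dist_of_re_eq (by simp [embR, re])]
    simpa [embR, yj_apply, Real.dist_eq] using h3 i
  have hG : Sm G := ⟨hGs, compact_of_tsupport hf_supp hsub⟩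
  refine ⟨G, hG, fun x => ?_, hsub, fun i => ?_⟩
  · have : re (embR x) = x := by ext k; simp [re, embR]
    simp [G, this, yj_apply, embR, hφ1 0 (by simpa using hε)]
  · obtain ⟨C, hC0, hC⟩ := (hG.dir (Pi.single i I)).bdd
    refine flat_of_zero_near C hC (ε / 2 / 2) (by positivity) fun z hz => ?_
    have hd : HasFDerivAt G (fderiv ℝ G z) z :=
      (hGs.differentiable (by simp)).differentiableAt.hasFDerivAt
    have hl := hd.hasLineDerivAt (Pi.single i I)
    have hconst : (fun t : ℝ => G (z + t • (Pi.single i I : Fin m → ℂ))) =ᶠ[nhds 0] fun _ => G z := by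
      have hopen : IsOpen {t : ℝ | |yj i z + t| < ε / 2 / 2} :=
        isOpen_lt (by fun_prop) continuous_const
      filter_upwards [hopen.mem_nhds (by simpa using hz)] with t ht
      have h1 : re (z + t • (Pi.single i I : Fin m → ℂ)) = re z := by
        ext k
        by_cases hk : k = i
        · subst hk; simp [re]
        · simp [re, hk]
      simp only [G, h1]
      congr 1
      refine Finset.prod_congr rfl fun k _ => ?_
      by_cases hk : k = i
      · subst hk
        rw [hφ1 _ hz, hφ1]
        simpa [yj_apply] using ht
      · simp [yj_apply, hk]
    have h0 : HasDerivAt (fun t : ℝ => G (z + t • (Pi.single i I : Fin m → ℂ))) 0 0 :=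
      (hasDerivAt_const (0 : ℝ) (G z)).congr_of_eventuallyEq hconst
    exact HasDerivAt.unique hl h0

theorem ext_induction {m : ℕ} (f : (Fin m → ℝ) → ℂ)
    (hf_smooth : ContDiff ℝ ∞ f) (hf_supp : HasCompactSupport f) (S : Finset (Fin m)) :
    ∀ ε : ℝ, 0 < ε → ∃ G : (Fin m → ℂ) → ℂ, Sm G ∧ (∀ x, G (embR x) = f x) ∧
      tsupport G ⊆ Metric.thickening ε (embR '' tsupport f) ∧
      (∀ i ∈ S, Flat (yj i)
        (fun z => fderiv ℝ G z (Pi.single i 1) + I * fderiv ℝ G z (Pi.single i I))) ∧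
      ∀ i ∉ S, Flat (yj i) (fun z => fderiv ℝ G z (Pi.single i I)) := by
  induction S using Finset.induction_on with
  | empty =>
    intro ε hε
    obtain ⟨G, h1, h2, h3, h4⟩ := base_case f hf_smooth hf_supp ε hε
    exact ⟨G, h1, h2, h3, by simp, fun i _ => h4 i⟩
  | insert j S hj ih =>
    intro ε hε
    obtain ⟨G, hG, hGr, hGt, hGS, hGn⟩ := ih (ε / 2) (by positivity)
    obtain ⟨K, hK, hKm⟩ := exists_kernel
    obtain ⟨φ, hφ, hφ1, hφ0⟩ := exists_bump (ε / 4) (by positivity)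
    have hnorm : ‖(Pi.single j 1 : Fin m → ℂ)‖ ≤ 1 := by
      refine (pi_norm_le_iff_of_nonneg zero_le_one).2 fun k => ?_
      by_cases hk : k = j
      · subst hk; simp
      · simp [hk]
    have hts : tsupport (EE (yj j) K (Pi.single j 1) φ G) ⊆
        Metric.thickening ε (embR '' tsupport f) := by
      refine (EE_tsupport (yj j) K (Pi.single j 1) hnorm (ε / 4) hφ0 G).trans ?_
      refine (Metric.cthickening_subset_thickening' (δ₂ := ε / 2) (by positivity)
        (by linarith) _).trans ?_
      refine (Metric.thickening_subset_of_subset _ hGt).trans ?_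
      refine (Metric.thickening_thickening_subset _ _ _).trans ?_
      rw [add_halves]
    have hj1 : yj j (Pi.single j (1 : ℂ)) = 0 := by simp [yj_apply]
    have hjI : yj j (Pi.single j I) = 1 := by simp [yj_apply]
    have hne : ∀ i k : Fin m, i ≠ k → ∀ c : ℂ, yj i (Pi.single k c) = 0 := by
      intro i k hik c
      simp [yj_apply, hik]
    refine ⟨EE (yj j) K (Pi.single j 1) φ G, ⟨PK_contDiff _ hK (hG.hE _ hφ),
      compact_of_tsupport hf_supp hts⟩, fun x => ?_, hts, fun i hi => ?_, fun i hi => ?_⟩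
    · rw [EE_zero _ (by simpa using hKm 0) _ (hφ1 0 (by simpa using hε)) _ _
        (by simp [yj_apply, embR]), hGr]
    · by_cases hij : i = j
      · subst hij
        exact EE_dbar (yj i) hK hKm _ _ hj1 hjI hφ (ε / 4 / 2) (by positivity)
          (deriv_bump hφ1) hG (hGn i hj)
      · have hiS : i ∈ S := (Finset.mem_insert.1 hi).resolve_left hij
        have := (hGS i hiS).EE (l := yj j) hK (hne i j hij 1) hφ
        intro N
        obtain ⟨C, hC⟩ := this N
        refine ⟨C, fun z => ?_⟩
        beta_reduce
        rw [EE_dir _ hK _ hφ hG _ _ (hne j i (Ne.symm hij) 1),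
          EE_dir _ hK _ hφ hG _ _ (hne j i (Ne.symm hij) I),
          EE_lin _ hK _ hφ (hG.dir _) (hG.dir _)]
        exact hC z
    · have hij : i ≠ j := fun h => hi (h ▸ Finset.mem_insert_self _ _)
      have hiS : i ∉ S := fun h => hi (Finset.mem_insert_of_mem h)
      have := (hGn i hiS).EE (l := yj j) hK (hne i j hij 1) hφ
      intro N
      obtain ⟨C, hC⟩ := this N
      refine ⟨C, fun z => ?_⟩
      beta_reduce
      rw [EE_dir _ hK _ hφ hG _ _ (hne j i (Ne.symm hij) I)]
      exact hC z

/-- Existence of special almost holomorphic extensions (Lemma 2.1):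
for every `f ∈ C_0^∞(ℝ^m)` and `ε > 0` there is `F ∈ C_0^∞(ℂ^m)` extending `f`,
supported in the `ε`-neighborhood of `supp f`, with
`∂F/∂z̄_j = O(|Im z_j|^N)` for every `j` and every `N`. -/
theorem special_almost_holomorphic_extension {m : ℕ} (f : (Fin m → ℝ) → ℂ)
    (hf_smooth : ContDiff ℝ (⊤ : ℕ∞) f) (hf_supp : HasCompactSupport f)
    (ε : ℝ) (hε : 0 < ε) :
    ∃ F : (Fin m → ℂ) → ℂ,
      ContDiff ℝ (⊤ : ℕ∞) F ∧ HasCompactSupport F ∧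
      (∀ x : Fin m → ℝ, F (embR x) = f x) ∧
      tsupport F ⊆ Metric.thickening ε (embR '' tsupport f) ∧
      (∀ j : Fin m, ∀ N : ℕ, ∃ C : ℝ, ∀ z : Fin m → ℂ,
        ‖dbarj F j z‖ ≤ C * |(z j).im| ^ N) := by
  obtain ⟨G, hG, hGr, hGt, hGS, -⟩ :=
    ext_induction f hf_smooth hf_supp Finset.univ ε hε
  refine ⟨G, hG.1, hG.2, hGr, hGt, fun j N => ?_⟩
  obtain ⟨C, hC⟩ := hGS j (Finset.mem_univ j) N
  refine ⟨C / 2, fun z => ?_⟩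
  have h := hC z
  rw [yj_apply] at h
  unfold dbarj
  rw [norm_div, Complex.norm_ofNat]
  linarith
end
end

section
/- Let P be as in the context, let f ∈ C_0^∞(ℝ²), and let F be a special almost holomorphic extension of f. Then the diagonal function z ↦ F(z,z) is an almost holomorphic extension of x ↦ f(x,x), and (1/π²)∫_ℂ∫_ℂ (∂²F/∂z̄₁∂z̄₂)(z₁,z₂)·(z₁·1 − P)⁻¹(z₂·1 − P)⁻¹ L(dz₁) L(dz₂) = −(1/π)∫_ℂ (∂/∂z̄)[F(z,z)]·(z·1 − P)⁻¹ L(dz). -/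
open MeasureTheory Complex Real

noncomputable section

/-- The Cauchy–Riemann operator `∂F/∂z̄ = (∂F/∂x + i ∂F/∂y)/2` (one variable). -/
def dbar (F : ℂ → ℂ) (z : ℂ) : ℂ :=
  (fderiv ℝ F z 1 + Complex.I * fderiv ℝ F z Complex.I) / 2

/-- `∂F/∂z̄₁` for `F : ℂ² → ℂ`. -/
def dbar1 (F : ℂ × ℂ → ℂ) (z : ℂ × ℂ) : ℂ :=
  (fderiv ℝ F z (1, 0) + Complex.I * fderiv ℝ F z (Complex.I, 0)) / 2

/-- `∂F/∂z̄₂` for `F : ℂ² → ℂ`. -/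
def dbar2 (F : ℂ × ℂ → ℂ) (z : ℂ × ℂ) : ℂ :=
  (fderiv ℝ F z (0, 1) + Complex.I * fderiv ℝ F z (0, Complex.I)) / 2

/-- `∂²F/∂z̄₁∂z̄₂` for `F : ℂ² → ℂ`. -/
def dbar12 (F : ℂ × ℂ → ℂ) (z : ℂ × ℂ) : ℂ := dbar1 (fun w => dbar2 F w) z

/-- `F` is an almost holomorphic extension of `f ∈ C_0^∞(ℝ)`. -/
def IsAHExt (f : ℝ → ℂ) (F : ℂ → ℂ) : Prop :=
  ContDiff ℝ (⊤ : ℕ∞) F ∧ HasCompactSupport F ∧ (∀ x : ℝ, F x = f x) ∧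
    ∀ N : ℕ, ∃ C : ℝ, ∀ z : ℂ, ‖dbar F z‖ ≤ C * |z.im| ^ N

/-- `F` is a special almost holomorphic extension of `f ∈ C_0^∞(ℝ²)`. -/
def IsSpecialAHExt2 (f : ℝ × ℝ → ℂ) (F : ℂ × ℂ → ℂ) : Prop :=
  ContDiff ℝ (⊤ : ℕ∞) F ∧ HasCompactSupport F ∧
    (∀ x y : ℝ, F (x, y) = f (x, y)) ∧
    ∀ N : ℕ, ∃ C : ℝ, ∀ z : ℂ × ℂ,
      ‖dbar1 F z‖ ≤ C * |z.1.im| ^ N ∧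
      ‖dbar2 F z‖ ≤ C * |z.2.im| ^ N ∧
      ‖dbar12 F z‖ ≤ C * (|z.1.im| * |z.2.im|) ^ N

/-- The resolvent `(z·1 − P)⁻¹` (equal to `0` when `z·1 − P` is not invertible). -/
def res {B : Type*} [NormedAddCommGroup B] [NormedSpace ℂ B] (P : B →L[ℂ] B) (z : ℂ) :
    B →L[ℂ] B := Ring.inverse (z • (1 : B →L[ℂ] B) - P)

/-- The spectrum of `P` is real. -/
def RealSpectrum {B : Type*} [NormedAddCommGroup B] [NormedSpace ℂ B]
    (P : B →L[ℂ] B) : Prop := ∀ z ∈ spectrum ℂ P, z.im = 0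

/-- The resolvent of `P` has locally temperate growth near `ℝ`. -/
def TemperateResolventLoc {B : Type*} [NormedAddCommGroup B] [NormedSpace ℂ B]
    (P : B →L[ℂ] B) : Prop :=
  ∀ R > (0:ℝ), ∃ C N : ℝ, 0 ≤ C ∧ 0 ≤ N ∧ ∀ z : ℂ, z.im ≠ 0 → ‖z‖ ≤ R →
    ‖res P z‖ ≤ C * |z.im| ^ (-N)

/-- Polar-coordinate form of `∂̄`. -/
lemma dbar_polar (L : ℂ →L[ℝ] ℂ) (u : ℂ) :
    L u + I * L (I * u) = (starRingEnd ℂ u) * (L 1 + I * L I) := by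
  have key : ∀ v : ℂ, L v = v.re * L 1 + v.im * L I := by
    intro v
    have : v = v.re • (1 : ℂ) + v.im • I := by
      simp [Complex.re_add_im]
    conv_lhs => rw [this]
    rw [map_add, map_smul, map_smul]
    simp
  rw [key u, key (I * u)]
  have h : (starRingEnd ℂ u) = u.re - u.im * I := by
    apply Complex.ext <;> simp
  rw [h]
  have := Complex.I_mul_I
  simp only [mul_re, mul_im, I_re, I_im]
  push_cast
  linear_combination (u.im * L I - 0) * this

lemma polar_integrable (A : ℝ × ℝ → ℂ) (hA : Continuous A) (R : ℝ)
    (h0 : ∀ p : ℝ × ℝ, R < p.1 → A p = 0) :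
    IntegrableOn A (Set.Ioi 0 ×ˢ Set.Ioo (-π) π) := by
  have h1 : IntegrableOn A (Set.Icc 0 R ×ˢ Set.Icc (-π) π) :=
    hA.continuousOn.integrableOn_compact (isCompact_Icc.prod isCompact_Icc)
  refine h1.of_forall_sdiff_eq_zero (measurableSet_Ioi.prod measurableSet_Ioo) ?_
  rintro ⟨r, t⟩ ⟨⟨hr, ht⟩, hn⟩
  apply h0
  by_contra hc
  exact hn ⟨⟨le_of_lt hr, not_lt.mp hc⟩, ⟨ht.1.le, ht.2.le⟩⟩

/-- The Cauchy–Pompeiu formula at the origin. -/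
lemma cauchy_pompeiu_zero (g : ℂ → ℂ) (hg : ContDiff ℝ 1 g) (hs : HasCompactSupport g) :
    ∫ w : ℂ, dbar g w / w = -π * g 0 := by
  obtain ⟨R, hR⟩ := hs.isCompact.isBounded.subset_closedBall 0
  have hgz : ∀ w : ℂ, R < ‖w‖ → g w = 0 := by
    intro w hw
    by_contra hc
    have := hR (subset_tsupport g hc)
    simp at this; linarith
  have hdz : ∀ w : ℂ, R < ‖w‖ → fderiv ℝ g w = 0 := by
    intro w hw
    by_contra hc
    have := hR (support_fderiv_subset ℝ hc)
    simp at this; linarith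
  have hDc : Continuous (fderiv ℝ g) := hg.continuous_fderiv one_ne_zero
  have hd : Differentiable ℝ g := hg.differentiable one_ne_zero
  set u : ℝ → ℂ := fun t => Complex.exp (t * I) with hu
  have huc : Continuous u := by fun_prop
  have hun : ∀ t, ‖u t‖ = 1 := fun t => Complex.norm_exp_ofReal_mul_I t
  set A : ℝ × ℝ → ℂ := fun p => fderiv ℝ g (p.1 * u p.2) (u p.2) with hA
  set B : ℝ × ℝ → ℂ := fun p => fderiv ℝ g (p.1 * u p.2) (I * u p.2) with hB
  have hpc : Continuous (fun p : ℝ × ℝ => (p.1 : ℂ) * u p.2) := by fun_prop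
  have hAc : Continuous A := (hDc.comp hpc).clm_apply (by fun_prop)
  have hBc : Continuous B := (hDc.comp hpc).clm_apply (by fun_prop)
  have hnorm : ∀ r t : ℝ, R < r → R < ‖(r : ℂ) * u t‖ := by
    intro r t h
    rw [norm_mul, hun, mul_one, Complex.norm_real]
    exact h.trans_le (le_abs_self r)
  have hAi := polar_integrable A hAc R (fun p hp => by
    simp only [hA]; rw [hdz _ (hnorm _ _ hp)]; simp)
  have hBi := polar_integrable B hBc R (fun p hp => by
    simp only [hB]; rw [hdz _ (hnorm _ _ hp)]; simp)
  have hAint : ∫ p in (Set.Ioi 0 ×ˢ Set.Ioo (-π) π), A p = -(2 * π) * g 0 := by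
    rw [Measure.volume_eq_prod] at hAi ⊢
    rw [IntegrableOn, ← Measure.prod_restrict] at hAi
    rw [← Measure.prod_restrict, integral_prod_symm _ hAi]
    have : ∀ t : ℝ, ∫ r in Set.Ioi (0:ℝ), A (r, t) = - g 0 := by
      intro t
      have hder : ∀ r ∈ Set.Ici (0:ℝ), HasDerivAt (fun r : ℝ => g (r * u t)) (A (r, t)) r := by
        intro r _
        have h1 : HasDerivAt (fun r : ℝ => (r : ℂ) * u t) (u t) r := by
          simpa using (Complex.ofRealCLM.hasDerivAt (x := r)).mul_const (u t)
        exact (hd _).hasFDerivAt.comp_hasDerivAt r h1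
      have hint : IntegrableOn (fun r => A (r, t)) (Set.Ioi 0) := by
        have h1 : IntegrableOn (fun r => A (r, t)) (Set.Icc 0 R) :=
          (hAc.comp (by fun_prop : Continuous fun r : ℝ => (r, t))).continuousOn.integrableOn_compact isCompact_Icc
        refine h1.of_forall_sdiff_eq_zero measurableSet_Ioi ?_
        rintro r ⟨hr, hn⟩
        have : R < r := by
          by_contra hc
          exact hn ⟨le_of_lt hr, not_lt.mp hc⟩
        simp only [hA]; rw [hdz _ (hnorm _ _ this)]; simp
      have := integral_Ioi_of_hasDerivAt_of_tendsto' (m := 0) hder hint (by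
        refine tendsto_const_nhds.congr' ?_
        filter_upwards [Filter.eventually_gt_atTop R] with r hr
        exact (hgz _ (hnorm _ _ hr)).symm)
      rw [this]; simp
    simp_rw [this]
    rw [setIntegral_const]
    have hv : volume.real (Set.Ioo (-π) π) = 2 * π := by
      rw [Real.volume_real_Ioo_of_le (by linarith [Real.pi_pos])]; ring
    rw [hv, Complex.real_smul]
    push_cast; ring
  have hBint : ∫ p in (Set.Ioi 0 ×ˢ Set.Ioo (-π) π), B p = 0 := by
    rw [Measure.volume_eq_prod] at hBi ⊢
    rw [IntegrableOn, ← Measure.prod_restrict] at hBi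
    rw [← Measure.prod_restrict, integral_prod _ hBi]
    apply setIntegral_eq_zero_of_forall_eq_zero
    intro r hr
    have hr0 : (r : ℂ) ≠ 0 := by exact_mod_cast (ne_of_gt hr)
    rw [← integral_Ioc_eq_integral_Ioo, ← intervalIntegral.integral_of_le (by linarith [Real.pi_pos])]
    have hder : ∀ t ∈ Set.uIcc (-π) π, HasDerivAt (fun t : ℝ => g (r * u t)) (r * B (r, t)) t := by
      intro t _
      have h0 : HasDerivAt u (I * u t) t := by
        have h2 : HasDerivAt (fun t : ℝ => (t : ℂ) * I) I t := by
          simpa using (Complex.ofRealCLM.hasDerivAt (x := t)).mul_const I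
        simpa [hu, mul_comm] using h2.cexp
      have h1 : HasDerivAt (fun t : ℝ => (r : ℂ) * u t) (r * (I * u t)) t := h0.const_mul _
      have h3 := (hd (r * u t)).hasFDerivAt.comp_hasDerivAt t h1
      have h4 : (r : ℂ) * (I * u t) = r • (I * u t) := by simp
      rw [h4, map_smul] at h3
      rw [Complex.real_smul] at h3
      exact h3
    have hcont : Continuous fun t => (r : ℂ) * B (r, t) := by
      have := hBc.comp (by fun_prop : Continuous fun t : ℝ => (r, t))
      exact continuous_const.mul this
    have := intervalIntegral.integral_eq_sub_of_hasDerivAt hder (hcont.intervalIntegrable _ _)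
    have hper : u π = u (-π) := by
      simp [hu, Complex.exp_neg]
    rw [intervalIntegral.integral_const_mul, hper, sub_self] at this
    exact (mul_eq_zero.mp this).resolve_left hr0
  rw [← Complex.integral_comp_polarCoord_symm]
  have : ∀ p ∈ (Set.Ioi 0 ×ˢ Set.Ioo (-π) π : Set (ℝ × ℝ)),
      p.1 • (dbar g (Complex.polarCoord.symm p) / Complex.polarCoord.symm p) =
      (1 / 2 : ℂ) * A p + (I / 2) * B p := by
    rintro ⟨r, t⟩ ⟨hr, ht⟩
    have hr0 : (r : ℂ) ≠ 0 := by exact_mod_cast (ne_of_gt hr)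
    have hp : Complex.polarCoord.symm (r, t) = r * u t := by
      rw [Complex.polarCoord_symm_apply]
      simp [hu, Complex.exp_mul_I]
    have hinv : (starRingEnd ℂ) (u t) = (u t)⁻¹ := by
      rw [Complex.inv_def, Complex.normSq_eq_norm_sq, hun]; simp
    have hu0 : u t ≠ 0 := Complex.exp_ne_zero _
    have h := dbar_polar (fderiv ℝ g (r * u t)) (u t)
    rw [hinv] at h
    have h2 : (1 / 2 : ℂ) * A (r, t) + (I / 2) * B (r, t) =
        (A (r, t) + I * B (r, t)) / 2 := by ring
    rw [h2, hp]
    simp only [hA, hB]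
    rw [h, dbar]
    simp only [Complex.real_smul]
    field_simp
  have htg : polarCoord.target = (Set.Ioi 0 ×ˢ Set.Ioo (-π) π : Set (ℝ × ℝ)) := rfl
  rw [htg, setIntegral_congr_fun (measurableSet_Ioi.prod measurableSet_Ioo) this,
    integral_add (hAi.const_mul _) (hBi.const_mul _), integral_const_mul, integral_const_mul,
    hAint, hBint]
  ring

/-- The Cauchy–Pompeiu formula for compactly supported functions. -/
lemma cauchy_pompeiu (g : ℂ → ℂ) (hg : ContDiff ℝ 1 g) (hs : HasCompactSupport g) (a : ℂ) :
    ∫ w : ℂ, dbar g w / (w - a) = -π * g a := by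
  have h := cauchy_pompeiu_zero (fun w => g (w + a)) (hg.comp (by fun_prop))
    (hs.comp_homeomorph (Homeomorph.addRight a))
  have h2 : ∀ w, dbar (fun w => g (w + a)) w = dbar g (w + a) := by
    intro w; simp only [dbar, fderiv_comp_add_right]
  simp_rw [h2] at h
  rw [← integral_add_right_eq_self (μ := volume) _ a]
  simpa using h

lemma dbar1_contDiff {F : ℂ × ℂ → ℂ} (hF : ContDiff ℝ (⊤ : ℕ∞) F) :
    ContDiff ℝ (⊤ : ℕ∞) (dbar1 F) := by
  have h : ContDiff ℝ (⊤ : ℕ∞) (fderiv ℝ F) := hF.fderiv_right (by simp)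
  unfold dbar1
  have h1 := h.clm_apply (contDiff_const (c := ((1, 0) : ℂ × ℂ)))
  have h2 := h.clm_apply (contDiff_const (c := ((I, 0) : ℂ × ℂ)))
  exact (h1.add (contDiff_const.mul h2)).div_const _

lemma dbar2_contDiff {F : ℂ × ℂ → ℂ} (hF : ContDiff ℝ (⊤ : ℕ∞) F) :
    ContDiff ℝ (⊤ : ℕ∞) (dbar2 F) := by
  have h : ContDiff ℝ (⊤ : ℕ∞) (fderiv ℝ F) := hF.fderiv_right (by simp)
  unfold dbar2
  have h1 := h.clm_apply (contDiff_const (c := ((0, 1) : ℂ × ℂ)))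
  have h2 := h.clm_apply (contDiff_const (c := ((0, I) : ℂ × ℂ)))
  exact (h1.add (contDiff_const.mul h2)).div_const _

lemma dbar1_supp {F : ℂ × ℂ → ℂ} (hF : HasCompactSupport F) : HasCompactSupport (dbar1 F) := by
  refine (hF.fderiv ℝ).mono fun z hz => ?_
  contrapose! hz
  have : fderiv ℝ F z = 0 := by simpa using hz
  simp [dbar1, this]

lemma dbar2_supp {F : ℂ × ℂ → ℂ} (hF : HasCompactSupport F) : HasCompactSupport (dbar2 F) := by
  refine (hF.fderiv ℝ).mono fun z hz => ?_
  contrapose! hz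
  have : fderiv ℝ F z = 0 := by simpa using hz
  simp [dbar2, this]

/-- The mixed Cauchy–Riemann derivatives commute. -/
lemma dbar21 {F : ℂ × ℂ → ℂ} (hF : ContDiff ℝ (⊤ : ℕ∞) F) (z : ℂ × ℂ) :
    dbar2 (dbar1 F) z = dbar12 F z := by
  have h : ContDiff ℝ (⊤ : ℕ∞) (fderiv ℝ F) := hF.fderiv_right (by simp)
  have hd : DifferentiableAt ℝ (fderiv ℝ F) z := h.differentiable (by simp) z
  have happ : ∀ v : ℂ × ℂ, HasFDerivAt (fun w => fderiv ℝ F w v)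
      ((fderiv ℝ (fderiv ℝ F) z).flip v) z := by
    intro v
    have := hd.hasFDerivAt.clm_apply (hasFDerivAt_const v z)
    rw [ContinuousLinearMap.comp_zero, zero_add] at this
    exact this
  have hsymm : IsSymmSndFDerivAt ℝ F z :=
    hF.contDiffAt.isSymmSndFDerivAt (by
      rw [minSmoothness_of_isRCLikeNormedField]
      exact WithTop.coe_le_coe.mpr (le_top : (2 : ℕ∞) ≤ ⊤))
  have hc : ∀ v w : ℂ × ℂ, HasFDerivAt
      (fun y => (fderiv ℝ F y v + I * fderiv ℝ F y w) / 2)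
      ((1 / 2 : ℂ) • ((fderiv ℝ (fderiv ℝ F) z).flip v +
        I • (fderiv ℝ (fderiv ℝ F) z).flip w)) z := by
    intro v w
    have := ((happ v).add ((happ w).const_mul I)).const_mul (1 / 2 : ℂ)
    refine this.congr_of_eventuallyEq (Filter.Eventually.of_forall fun y => ?_)
    simp only [Pi.add_apply]
    ring
  have h1 : fderiv ℝ (dbar1 F) z = _ := (hc (1, 0) (I, 0)).fderiv
  have h2 : fderiv ℝ (fun w => dbar2 F w) z = _ := (hc (0, 1) (0, I)).fderiv
  rw [dbar12, dbar2, dbar1, h1, h2]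
  simp only [smul_apply, add_apply,
    ContinuousLinearMap.flip_apply, smul_eq_mul]
  rw [hsymm.eq (0, 1) (1, 0), hsymm.eq (0, 1) (I, 0), hsymm.eq (0, I) (1, 0),
    hsymm.eq (0, I) (I, 0)]
  ring

lemma dbar2_swap (G : ℂ × ℂ → ℂ) (hG : Differentiable ℝ G) (z : ℂ × ℂ) :
    dbar2 (fun w => G w.swap) z = dbar1 G z.swap := by
  have h : HasFDerivAt (fun w : ℂ × ℂ => G w.swap)
      ((fderiv ℝ G z.swap).comp (ContinuousLinearEquiv.prodComm ℝ ℂ ℂ : ℂ × ℂ →L[ℝ] ℂ × ℂ)) z :=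
    (hG z.swap).hasFDerivAt.comp z
      (ContinuousLinearEquiv.prodComm ℝ ℂ ℂ : ℂ × ℂ →L[ℝ] ℂ × ℂ).hasFDerivAt
  rw [dbar2, h.fderiv]
  simp [dbar1]

lemma dbar_slice (G : ℂ × ℂ → ℂ) (hG : Differentiable ℝ G) (a z : ℂ) :
    dbar (fun w => G (a, w)) z = dbar2 G (a, z) := by
  have h : HasFDerivAt (fun w : ℂ => G (a, w))
      ((fderiv ℝ G (a, z)).comp (ContinuousLinearMap.inr ℝ ℂ ℂ)) z :=
    (hG (a, z)).hasFDerivAt.comp z (hasFDerivAt_prodMk_right a z)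
  rw [dbar, h.fderiv]
  simp [dbar2]

lemma dbar_diag (G : ℂ × ℂ → ℂ) (hG : Differentiable ℝ G) (z : ℂ) :
    dbar (fun w => G (w, w)) z = dbar1 G (z, z) + dbar2 G (z, z) := by
  have h : HasFDerivAt (fun w : ℂ => G (w, w))
      ((fderiv ℝ G (z, z)).comp ((ContinuousLinearMap.id ℝ ℂ).prod (ContinuousLinearMap.id ℝ ℂ)))
      z :=
    HasFDerivAt.comp (f := fun w : ℂ => (w, w)) z (hG (z, z)).hasFDerivAt
      ((hasFDerivAt_id z).prodMk (hasFDerivAt_id z))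
  have hs : ∀ v : ℂ, fderiv ℝ G (z, z) (v, v) =
      fderiv ℝ G (z, z) (v, 0) + fderiv ℝ G (z, z) (0, v) := by
    intro v; rw [← map_add]; simp
  rw [dbar, h.fderiv]
  simp only [ContinuousLinearMap.comp_apply, ContinuousLinearMap.prod_apply,
    ContinuousLinearMap.id_apply, hs, dbar1, dbar2]
  ring

lemma kernel_integrable (R M : ℝ) :
    Integrable (fun z : ℂ × ℂ => (Metric.closedBall (0:ℂ) R).indicator (fun _ => (1:ℝ)) z.1 *
      (Metric.ball (0:ℂ) (2 * R + 1)).indicator (fun w => M * ‖w‖⁻¹) (z.2 - z.1)) := by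
  have h1 : Integrable ((Metric.closedBall (0:ℂ) R).indicator (fun _ => (1:ℝ))) := by
    rw [integrable_indicator_iff measurableSet_closedBall]
    exact integrableOn_const (by exact measure_closedBall_lt_top.ne)
  have h2 : Integrable ((Metric.ball (0:ℂ) (2 * R + 1)).indicator (fun w => M * ‖w‖⁻¹)) := by
    rw [integrable_indicator_iff Metric.isOpen_ball.measurableSet]
    refine integrableOn_ball_of_norm_le_rpow (α := 1) (C := |M|) (by simp) (by simp)
      (Filter.Eventually.of_forall fun w => ?_) (by fun_prop)
    simp [Real.rpow_neg_one]
  exact (measurePreserving_prod_sub (volume : Measure ℂ) volume).integrable_comp_of_integrable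
    (h1.mul_prod h2)

/-- One half of the collapse: integrate out the second variable by Cauchy–Pompeiu. -/
lemma collapse {E : Type*} [NormedAddCommGroup E] [NormedSpace ℂ E] [CompleteSpace E]
    (G : ℂ × ℂ → ℂ) (hG : ContDiff ℝ (⊤ : ℕ∞) G) (hs : HasCompactSupport G) (ρ : ℂ → E)
    (hρ : AEStronglyMeasurable ρ volume) (M : ℝ) (hM : ∀ z, ‖dbar2 G z • ρ z.1‖ ≤ M) :
    Integrable (fun z : ℂ × ℂ => (dbar2 G z / (z.2 - z.1)) • ρ z.1) ∧
    Integrable (fun z : ℂ => G (z, z) • ρ z) ∧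
    ∫ z : ℂ × ℂ, (dbar2 G z / (z.2 - z.1)) • ρ z.1 = (-π : ℂ) • ∫ z : ℂ, G (z, z) • ρ z := by
  have hd : Differentiable ℝ G := hG.differentiable (by simp)
  have hπ : (-π : ℂ) ≠ 0 := by simp [Real.pi_ne_zero]
  obtain ⟨R, hR⟩ := (dbar2_supp hs).isCompact.isBounded.subset_closedBall 0
  have hsupp : ∀ z, dbar2 G z ≠ 0 → ‖z.1‖ ≤ R ∧ ‖z.2‖ ≤ R := by
    intro z hz
    have := hR (subset_tsupport _ hz)
    rw [mem_closedBall_zero_iff] at this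
    exact ⟨(norm_fst_le z).trans this, (norm_snd_le z).trans this⟩
  have hM0 : 0 ≤ M := (norm_nonneg _).trans (hM 0)
  have hint : Integrable (fun z : ℂ × ℂ => (dbar2 G z / (z.2 - z.1)) • ρ z.1) := by
    refine (kernel_integrable R M).mono' ?_ (Filter.Eventually.of_forall fun z => ?_)
    · have hm : Measurable (fun z : ℂ × ℂ => dbar2 G z / (z.2 - z.1)) :=
        (dbar2_contDiff hG).continuous.measurable.div (by fun_prop)
      exact hm.aestronglyMeasurable.smul hρ.comp_fst
    · by_cases hz : dbar2 G z = 0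
      · simp only [hz, zero_div, zero_smul, norm_zero]
        refine mul_nonneg (Set.indicator_nonneg (fun _ _ => zero_le_one) _)
          (Set.indicator_nonneg (fun _ _ => by positivity) _)
      · obtain ⟨h1, h2⟩ := hsupp z hz
        rw [Set.indicator_of_mem (by simpa using h1), Set.indicator_of_mem, one_mul]
        · have := hM z
          rw [norm_smul] at this ⊢
          rw [norm_div, div_eq_mul_inv, mul_right_comm]
          gcongr
        · rw [mem_ball_zero_iff]
          have := norm_sub_le z.2 z.1
          linarith
  have hinner : ∀ a : ℂ, ∫ w : ℂ, (dbar2 G (a, w) / (w - a)) • ρ a = (-π : ℂ) • G (a, a) • ρ a := by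
    intro a
    have hc := cauchy_pompeiu (fun w => G (a, w))
      ((hG.comp (contDiff_prodMk_right a)).of_le (by exact_mod_cast le_top))
      (hs.comp_isClosedEmbedding (Topology.IsClosedEmbedding.of_continuous_injective_isClosedMap
        (by fun_prop) (fun x y h => (Prod.mk.inj h).2)
        (isClosedMap_prodMk_left a))) a
    simp_rw [dbar_slice G hd] at hc
    rw [integral_smul_const, hc, smul_smul]
  refine ⟨hint, ?_, ?_⟩
  · have := (show Integrable _ (volume.prod volume) from hint).integral_prod_left
    simp only [hinner] at this
    exact (integrable_smul_iff hπ _).mp this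
  · rw [Measure.volume_eq_prod, integral_prod _ hint]
    simp only [hinner]
    rw [integral_smul]

lemma res_isUnit {B : Type*} [NormedAddCommGroup B] [NormedSpace ℂ B]
    (P : B →L[ℂ] B) (hspec : RealSpectrum P) (z : ℂ) (hz : z.im ≠ 0) :
    IsUnit (z • (1 : B →L[ℂ] B) - P) := by
  by_contra hc
  apply hz
  apply hspec
  rw [spectrum.mem_iff, Algebra.algebraMap_eq_smul_one]
  exact hc

/-- The resolvent identity. -/
lemma res_mul {B : Type*} [NormedAddCommGroup B] [NormedSpace ℂ B]
    (P : B →L[ℂ] B) (hspec : RealSpectrum P) (z w : ℂ) (hz : z.im ≠ 0) (hw : w.im ≠ 0)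
    (hzw : z ≠ w) : res P z * res P w = (w - z)⁻¹ • (res P z - res P w) := by
  have h1 := Ring.inverse_mul_cancel _ (res_isUnit P hspec z hz)
  have h2 := Ring.mul_inverse_cancel _ (res_isUnit P hspec w hw)
  have hne : w - z ≠ 0 := sub_ne_zero.mpr hzw.symm
  have : res P z - res P w = (w - z) • (res P z * res P w) := by
    have e : (w - z) • (1 : B →L[ℂ] B) = (w • 1 - P) - (z • 1 - P) := by
      rw [sub_smul]; abel
    calc res P z - res P w = res P z * ((w • 1 - P) * res P w)
          - (res P z * (z • 1 - P)) * res P w := by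
          unfold res; rw [h1, h2, mul_one, one_mul]
      _ = res P z * (((w • 1 - P) - (z • 1 - P)) * res P w) := by noncomm_ring
      _ = _ := by rw [← e, smul_mul_assoc, one_mul, mul_smul_comm]
  rw [this, smul_smul, inv_mul_cancel₀ hne, one_smul]

lemma res_measurable {B : Type*} [NormedAddCommGroup B] [NormedSpace ℂ B] [CompleteSpace B]
    (P : B →L[ℂ] B) (hspec : RealSpectrum P) :
    AEStronglyMeasurable ({z : ℂ | z.im ≠ 0}.indicator (res P)) volume := by
  have hop : IsOpen {z : ℂ | z.im ≠ 0} := isOpen_ne_fun Complex.continuous_im continuous_const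
  rw [aestronglyMeasurable_indicator_iff hop.measurableSet]
  refine ContinuousOn.aestronglyMeasurable ?_ hop.measurableSet
  intro z hz
  obtain ⟨u, hu⟩ := res_isUnit P hspec z hz
  have h1 : ContinuousAt Ring.inverse (z • (1 : B →L[ℂ] B) - P) := by
    rw [← hu]; exact NormedRing.inverse_continuousAt u
  have h2 : ContinuousAt (fun z : ℂ => z • (1 : B →L[ℂ] B) - P) z := by fun_prop
  exact (ContinuousAt.comp (f := fun z : ℂ => z • (1 : B →L[ℂ] B) - P) h1 h2).continuousWithinAt

lemma bound_aux {B : Type*} [NormedAddCommGroup B] [NormedSpace ℂ B]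
    (P : B →L[ℂ] B) (hres : TemperateResolventLoc P) (R : ℝ) :
    ∃ (n : ℕ) (K : ℝ), 0 ≤ K ∧ ∀ z : ℂ, z.im ≠ 0 → ‖z‖ ≤ R → |z.im| ^ n * ‖res P z‖ ≤ K := by
  obtain ⟨C, N, hC, hN, h⟩ := hres (|R| + 1) (by positivity)
  refine ⟨⌈N⌉₊, (|R| + 1) ^ ((⌈N⌉₊ : ℝ) - N) * C, by positivity, fun z hz hzR => ?_⟩
  have hzR' : ‖z‖ ≤ |R| + 1 := by linarith [le_abs_self R]
  have hpos : 0 < |z.im| := abs_pos.mpr hz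
  calc |z.im| ^ ⌈N⌉₊ * ‖res P z‖ ≤ |z.im| ^ ⌈N⌉₊ * (C * |z.im| ^ (-N)) := by
        gcongr; exact h z hz hzR'
    _ = |z.im| ^ ((⌈N⌉₊ : ℝ) - N) * C := by
        rw [sub_eq_add_neg, Real.rpow_add hpos, Real.rpow_natCast]; ring
    _ ≤ _ := by
        gcongr
        · linarith [Nat.le_ceil N]
        · exact (Complex.abs_im_le_norm z).trans hzR'

lemma bound_main {B : Type*} [NormedAddCommGroup B] [NormedSpace ℂ B]
    (P : B →L[ℂ] B) (hres : TemperateResolventLoc P) (R : ℝ) (H : ℂ × ℂ → ℂ)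
    (hsupp : ∀ z, H z ≠ 0 → ‖z‖ ≤ R)
    (hH : ∀ N : ℕ, ∃ C : ℝ, ∀ z, ‖H z‖ ≤ C * (|z.1.im| * |z.2.im|) ^ N) :
    ∃ M, ∀ z, ‖H z • {z : ℂ | z.im ≠ 0}.indicator (res P) z.1‖ ≤ M := by
  obtain ⟨n, K, hK, h⟩ := bound_aux P hres R
  obtain ⟨C, hC⟩ := hH n
  refine ⟨|C| * |R| ^ n * K, fun z => ?_⟩
  have hM : 0 ≤ |C| * |R| ^ n * K := by positivity
  by_cases hz : H z = 0
  · simpa [hz] using hM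
  by_cases hi : z.1.im = 0
  · rw [Set.indicator_of_notMem (by simpa using hi)]
    simpa using hM
  have hzR := hsupp z hz
  have h1 := (norm_fst_le z).trans hzR
  have h2 := ((Complex.abs_im_le_norm z.2).trans ((norm_snd_le z).trans hzR)).trans (le_abs_self R)
  rw [Set.indicator_of_mem (by simpa using hi), norm_smul]
  calc ‖H z‖ * ‖res P z.1‖ ≤ (|C| * (|z.1.im| * |z.2.im|) ^ n) * ‖res P z.1‖ := by
        gcongr
        exact (hC z).trans (by gcongr; exact le_abs_self C)
    _ = |C| * |z.2.im| ^ n * (|z.1.im| ^ n * ‖res P z.1‖) := by rw [mul_pow]; ring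
    _ ≤ _ := by
        gcongr
        exact h _ hi h1

/-- Proposition 4.2 (case `m = 2`): `f(P, P) = f^{(1)}(P)` where `f^{(1)}(x) = f(x,x)`.
The diagonal `z ↦ F(z,z)` is an almost holomorphic extension of `x ↦ f(x,x)` and the
two-fold iterated Cauchy integral collapses to the one-dimensional one. -/
theorem diagonal_restriction {B : Type*} [NormedAddCommGroup B] [NormedSpace ℂ B]
    [CompleteSpace B] (P : B →L[ℂ] B)
    (hspec : RealSpectrum P) (hres : TemperateResolventLoc P)
    (f : ℝ × ℝ → ℂ) (hf_smooth : ContDiff ℝ (⊤ : ℕ∞) f) (hf_supp : HasCompactSupport f)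
    (F : ℂ × ℂ → ℂ) (hF : IsSpecialAHExt2 f F) :
    IsAHExt (fun x : ℝ => f (x, x)) (fun z : ℂ => F (z, z)) ∧
    ((1/(π:ℂ)^2)) • ∫ z : ℂ × ℂ, dbar12 F z • (res P z.1 * res P z.2) =
      (-(1/(π:ℂ))) • ∫ z : ℂ, dbar (fun w : ℂ => F (w, w)) z • res P z := by
  obtain ⟨hFs, hFc, hFf, hFb⟩ := hF
  have hFd : Differentiable ℝ F := hFs.differentiable (by simp)
  have hdiag : ∀ z, dbar (fun w => F (w, w)) z = dbar1 F (z, z) + dbar2 F (z, z) :=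
    dbar_diag F hFd
  have hAH : IsAHExt (fun x : ℝ => f (x, x)) (fun z : ℂ => F (z, z)) := by
    refine ⟨hFs.comp (contDiff_id.prodMk contDiff_id), ?_, fun x => hFf x x, fun N => ?_⟩
    · exact hFc.comp_isClosedEmbedding (g := fun z : ℂ => (z, z))
        (Topology.IsClosedEmbedding.of_continuous_injective_isClosedMap
          (by fun_prop) (fun x y h => (Prod.mk.inj h).1)
          (fun s hs => by
            have : (fun z : ℂ => (z, z)) '' s = {p : ℂ × ℂ | p.1 = p.2} ∩ Prod.fst ⁻¹' s := by
              ext ⟨a, b⟩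
              constructor
              · rintro ⟨x, hx, h⟩
                obtain ⟨rfl, rfl⟩ := Prod.mk.inj h
                exact ⟨rfl, hx⟩
              · rintro ⟨h, hx⟩
                simp only [Set.mem_ofPred_eq] at h
                subst h
                exact ⟨a, hx, rfl⟩
            rw [this]
            exact (isClosed_eq continuous_fst continuous_snd).inter
              (hs.preimage continuous_fst)))
    · obtain ⟨C, hC⟩ := hFb N
      refine ⟨C + C, fun z => ?_⟩
      rw [hdiag, add_mul]
      exact (norm_add_le _ _).trans (add_le_add (hC (z, z)).1 (hC (z, z)).2.1)
  refine ⟨hAH, ?_⟩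
  set ρ : ℂ → (B →L[ℂ] B) := {z : ℂ | z.im ≠ 0}.indicator (res P) with hρdef
  have hρm : AEStronglyMeasurable ρ volume := res_measurable P hspec
  have hρ1 : ∀ z : ℂ, z.im ≠ 0 → ρ z = res P z := fun z hz => Set.indicator_of_mem hz _
  have hH : ∀ N : ℕ, ∃ C : ℝ, ∀ z, ‖dbar12 F z‖ ≤ C * (|z.1.im| * |z.2.im|) ^ N := fun N => by
    obtain ⟨C, hC⟩ := hFb N
    exact ⟨C, fun z => (hC z).2.2⟩
  have hzero : ∀ z : ℂ × ℂ, z.1.im = 0 ∨ z.2.im = 0 → dbar12 F z = 0 := by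
    intro z hz
    obtain ⟨C, hC⟩ := hH 1
    have := hC z
    rcases hz with h | h <;> simpa [h] using this
  have hcs : HasCompactSupport (dbar12 F) := dbar1_supp (dbar2_supp hFc)
  obtain ⟨R, hR⟩ := hcs.isCompact.isBounded.subset_closedBall 0
  have hsupp : ∀ z, dbar12 F z ≠ 0 → ‖z‖ ≤ R := fun z hz => by
    simpa using hR (subset_tsupport _ hz)
  obtain ⟨M₁, hM₁⟩ := bound_main P hres R (dbar12 F) hsupp hH
  obtain ⟨M₂, hM₂⟩ := bound_main P hres R (fun z => dbar12 F z.swap)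
    (fun z hz => by simpa [Prod.norm_def, max_comm] using hsupp z.swap hz)
    (fun N => by
      obtain ⟨C, hC⟩ := hH N
      refine ⟨C, fun z => ?_⟩
      simpa [mul_comm] using hC z.swap)
  have hsw : ∀ z, dbar2 (fun w => dbar2 F w.swap) z = dbar12 F z.swap := fun z =>
    dbar2_swap (dbar2 F) ((dbar2_contDiff hFs).differentiable (by simp)) z
  obtain ⟨hi1, hj1, he1⟩ := collapse (dbar1 F) (dbar1_contDiff hFs) (dbar1_supp hFc) ρ hρm M₁
    (fun z => by rw [dbar21 hFs]; exact hM₁ z)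
  obtain ⟨hi2, hj2, he2⟩ := collapse (fun w => dbar2 F w.swap)
    ((dbar2_contDiff hFs).comp (contDiff_snd.prodMk contDiff_fst))
    ((dbar2_supp hFc).comp_homeomorph (Homeomorph.prodComm ℂ ℂ)) ρ hρm M₂
    (fun z => by rw [hsw]; exact hM₂ z)
  simp only [dbar21 hFs] at hi1 he1
  simp only [hsw, Prod.swap_prod_mk] at hi2 hj2 he2
  have hi2' : Integrable (fun z : ℂ × ℂ => (dbar12 F z / (z.1 - z.2)) • ρ z.2) :=
    (show Integrable _ (volume.prod volume) from hi2).swap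
  have he2' : ∫ z : ℂ × ℂ, (dbar12 F z / (z.1 - z.2)) • ρ z.2 =
      (-π : ℂ) • ∫ z : ℂ, dbar2 F (z, z) • ρ z := by
    rw [← he2]
    exact (integral_prod_swap (μ := (volume : Measure ℂ)) (ν := (volume : Measure ℂ))
      (fun z : ℂ × ℂ => (dbar12 F z / (z.1 - z.2)) • ρ z.2)).symm
  have hne : ∀ᵐ z : ℂ × ℂ, z.1 ≠ z.2 := by
    rw [Measure.volume_eq_prod, Measure.ae_prod_iff_ae_ae]
    · refine Filter.Eventually.of_forall fun a => ?_
      filter_upwards [Measure.ae_ne volume a] with b hb using hb.symm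
    · exact (isOpen_ne_fun continuous_fst continuous_snd).measurableSet
  have hL : ∫ z : ℂ × ℂ, dbar12 F z • (res P z.1 * res P z.2) =
      ∫ z : ℂ × ℂ, ((dbar12 F z / (z.2 - z.1)) • ρ z.1 + (dbar12 F z / (z.1 - z.2)) • ρ z.2) := by
    refine integral_congr_ae ?_
    filter_upwards [hne] with z hz
    by_cases h1 : z.1.im = 0
    · simp [hzero z (Or.inl h1)]
    by_cases h2 : z.2.im = 0
    · simp [hzero z (Or.inr h2)]
    rw [res_mul P hspec _ _ h1 h2 hz, hρ1 _ h1, hρ1 _ h2, ← neg_sub z.2 z.1, div_neg, neg_smul,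
      ← sub_eq_add_neg, ← smul_sub, smul_smul, div_eq_mul_inv]
  have hRt : ∫ z : ℂ, dbar (fun w : ℂ => F (w, w)) z • res P z =
      ∫ z : ℂ, (dbar1 F (z, z) • ρ z + dbar2 F (z, z) • ρ z) := by
    congr 1
    ext1 z
    rw [← add_smul, ← hdiag]
    by_cases h1 : z.im = 0
    · obtain ⟨C, hC⟩ := hAH.2.2.2 1
      have := hC z
      have h0 : dbar (fun w : ℂ => F (w, w)) z = 0 := by simpa [h1] using this
      rw [h0, zero_smul, zero_smul]
    · rw [hρ1 _ h1]
  rw [hL, hRt, integral_add hi1 hi2', integral_add hj1 hj2, he1, he2', ← smul_add, smul_smul]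
  congr 1
  have : (π : ℂ) ≠ 0 := by simp [Real.pi_ne_zero]
  field_simp
end
end
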